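/- Let p be a prime, A a δ-ring, and T_1,…,T_d ∈ A. Let B = A[X_{i,n} : 1 ≤ i ≤ d, n ∈ ℕ] be the polynomial ring over A equipped with a δ-structure extending that of A and satisfying δ(X_{i,n}) = X_{i,n+1}, and let D = B/K, where K is the ideal of B generated by all elements δ^n(p·X_{i,0} − T_i) for 1 ≤ i ≤ d and n ∈ ℕ. If A is p-torsion free and the images of T_1,…,T_d in A/pA form a regular sequence, then D is p-torsion free. -/

import Mathlib

/-- A δ-structure on a commutative ring `A`, relative to a prime `p`. -/
structure DeltaStructure (p : ℕ) (A : Type*) [CommRing A] where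
  δ : A → A
  delta_zero : δ 0 = 0
  delta_one : δ 1 = 0
  delta_add : ∀ x y : A, δ (x + y) =
    δ x + δ y - ∑ i ∈ Finset.Ioo 0 p, ((p.choose i / p : ℕ) : A) * x ^ i * y ^ (p - i)
  delta_mul : ∀ x y : A, δ (x * y) =
    δ x * y ^ p + x ^ p * δ y + (p : A) * δ x * δ y

open MvPolynomial

/-!
Order the generators `z_{n,i} = δⁿ(p X_{i,0} - T_i)` of `K` lexicographically, and suppose that each
of them is a nonzerodivisor modulo its predecessors and `p`. If `p x` is a combination of the
generators up to `z`, then the coefficient of `z` lies in the ideal of the predecessors of `z` and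
`p`. Subtracting a multiple of `z` from `x` thus makes `p x` a combination of the predecessors
alone, and well-founded induction gives `x ∈ K`.

Modulo `p` the generators are easy to describe. First, `z_{0,i} ≡ -T_i`, and regularity of the
`T_i` passes to polynomial rings. Next, `z_{n,i} = p X_{i,n} + f` with `f` involving only `X_{i,m}`
for `m < n`. Moreover `δ(p u + f) ≡ u ^ p + δ f`, where for `u = X_{i,n}` the degree of `δ f` in `u`
is at most one because `f` does not involve `u`. Hence `z_{n+1,i}` is modulo `p` a monic polynomial
of degree `p` in `X_{i,n}`, a variable that is absent modulo `p` from all of its predecessors.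
-/

section RegularSequences

variable {R : Type*} [CommRing R]

lemma isSMulRegular_quotient_iff_of_sub_mem {I : Ideal R} {x y : R} (h : x - y ∈ I) :
    IsSMulRegular (R ⧸ I) x ↔ IsSMulRegular (R ⧸ I) y := by
  rw [← isSMulRegular_algebraMap_iff (R ⧸ I), ← isSMulRegular_algebraMap_iff (R ⧸ I) (r := y),
    Ideal.Quotient.algebraMap_eq, Ideal.Quotient.eq.mpr h]

lemma span_image_sup_eq_of_sub_mem {κ : Type*} {I : Ideal R} {Y Z : κ → R} {s : Set κ}
    (h : ∀ k ∈ s, Y k - Z k ∈ I) :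
    Ideal.span (Y '' s) ⊔ I = Ideal.span (Z '' s) ⊔ I := by
  have key : ∀ {Y Z : κ → R}, (∀ k ∈ s, Y k - Z k ∈ I) →
      Ideal.span (Y '' s) ⊔ I ≤ Ideal.span (Z '' s) ⊔ I := by
    refine fun {Y Z} h => sup_le (Ideal.span_le.mpr ?_) le_sup_right
    rintro _ ⟨k, hk, rfl⟩
    rw [← sub_add_cancel (Y k) (Z k)]
    exact add_mem (Ideal.mem_sup_right (h k hk))
      (Ideal.mem_sup_left (Ideal.subset_span (Set.mem_image_of_mem Z hk)))
  exact le_antisymm (key h) (key fun k hk => by simpa using neg_mem (h k hk))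

lemma eq_zero_or_exists_mem_span_image_Iic {κ : Type*} [LinearOrder κ] {Y : κ → R} {s : Set κ}
    {x : R} (hx : x ∈ Ideal.span (Y '' s)) :
    x = 0 ∨ ∃ k ∈ s, x ∈ Ideal.span (Y '' Set.Iic k) := by
  induction hx using Submodule.span_induction with
  | mem _ hx =>
    obtain ⟨k, hk, rfl⟩ := hx
    exact .inr ⟨k, hk, Ideal.subset_span (Set.mem_image_of_mem Y Set.self_mem_Iic)⟩
  | zero => exact .inl rfl
  | add x y _ _ ihx ihy =>
    rcases ihx with rfl | ⟨k, hk, hxk⟩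
    · simpa only [zero_add] using ihy
    rcases ihy with rfl | ⟨l, hl, hyl⟩
    · exact .inr ⟨k, hk, by simpa only [add_zero] using hxk⟩
    have mono {m : κ} (hm : m ≤ max k l) :
        Ideal.span (Y '' Set.Iic m) ≤ Ideal.span (Y '' Set.Iic (max k l)) :=
      Ideal.span_mono (Set.image_mono (Set.Iic_subset_Iic.mpr hm))
    refine .inr ⟨max k l, ?_, add_mem (mono (le_max_left k l) hxk) (mono (le_max_right k l) hyl)⟩
    rcases max_choice k l with h | h <;> rwa [h]
  | smul a x _ ih =>
    rcases ih with rfl | ⟨k, hk, hxk⟩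
    · exact .inl (smul_zero a)
    · exact .inr ⟨k, hk, Submodule.smul_mem _ a hxk⟩

lemma exists_sub_mul_mem_span_image_Iio {κ : Type*} [PartialOrder κ] {q : R} {Y : κ → R} {k : κ}
    (hY : IsSMulRegular (R ⧸ Ideal.span (Y '' Set.Iio k) ⊔ Ideal.span {q}) (Y k)) {x : R}
    (hx : q * x ∈ Ideal.span (Y '' Set.Iic k)) :
    ∃ c, q * (x - c * Y k) ∈ Ideal.span (Y '' Set.Iio k) := by
  rw [← Set.Iio_insert, Set.image_insert_eq, Ideal.mem_span_insert] at hx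
  obtain ⟨a, z, hz, hqx⟩ := hx
  have ha : a ∈ Ideal.span (Y '' Set.Iio k) ⊔ Ideal.span {q} := by
    refine mem_of_isSMulRegular_quotient_of_smul_mem hY ?_
    rw [smul_eq_mul, show Y k * a = -z + q * x by rw [hqx]; ring]
    exact add_mem (Ideal.mem_sup_left (neg_mem hz))
      (Ideal.mem_sup_right (Ideal.mul_mem_right x _ (Ideal.mem_span_singleton_self q)))
  obtain ⟨w, hw, v, hv, rfl⟩ := Submodule.mem_sup.mp ha
  obtain ⟨c, rfl⟩ := Ideal.mem_span_singleton'.mp hv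
  refine ⟨c, ?_⟩
  rw [show q * (x - c * Y k) = w * Y k + z by rw [mul_sub, hqx]; ring]
  exact add_mem (Ideal.mul_mem_right _ _ hw) hz

theorem isSMulRegular_quotient_span_range {κ : Type*} [LinearOrder κ] [WellFoundedLT κ] {q : R}
    (hq : IsSMulRegular R q) {Y : κ → R}
    (hY : ∀ k, IsSMulRegular (R ⧸ Ideal.span (Y '' Set.Iio k) ⊔ Ideal.span {q}) (Y k)) :
    IsSMulRegular (R ⧸ Ideal.span (Set.range Y)) q := by
  have eq_zero {x : R} (hx : q * x = 0) : x = 0 := hq.right_eq_zero_of_smul hx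
  have mem_span_Iic (k : κ) : ∀ x, q * x ∈ Ideal.span (Y '' Set.Iic k) →
      x ∈ Ideal.span (Y '' Set.Iic k) := by
    induction k using WellFoundedLT.induction with
    | ind k ih =>
      intro x hx
      obtain ⟨c, hc⟩ := exists_sub_mul_mem_span_image_Iio (hY k) hx
      have hsub : x - c * Y k ∈ Ideal.span (Y '' Set.Iic k) := by
        rcases eq_zero_or_exists_mem_span_image_Iic hc with h | ⟨j, hj, h⟩
        · rw [eq_zero h]
          exact zero_mem _
        · exact Ideal.span_mono (Set.image_mono (Set.Iic_subset_Iic.mpr (le_of_lt hj)))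
            (ih j hj _ h)
      rw [← sub_add_cancel x (c * Y k)]
      exact add_mem hsub (Ideal.mul_mem_left _ c (Ideal.subset_span ⟨k, Set.self_mem_Iic, rfl⟩))
  rw [isSMulRegular_quotient_iff_mem_of_smul_mem]
  intro x hx
  rw [← Set.image_univ] at hx
  rcases eq_zero_or_exists_mem_span_image_Iic hx with h | ⟨k, -, h⟩
  · rw [eq_zero h]
    exact zero_mem _
  · exact Ideal.span_mono (Set.image_subset_range Y _) (mem_span_Iic k x h)

lemma isSMulRegular_of_isWeaklyRegular_ofFn {I : Ideal R} {d : ℕ} {T : Fin d → R}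
    (h : RingTheory.Sequence.IsWeaklyRegular (R ⧸ I)
      (List.ofFn fun i => Ideal.Quotient.mk I (T i))) (i : Fin d) :
    IsSMulRegular (R ⧸ Ideal.span (T '' Set.Iio i) ⊔ I) (T i) := by
  have hlist : (List.ofFn fun i => Ideal.Quotient.mk I (T i)) =
      (List.ofFn T).map (algebraMap R (R ⧸ I)) := by
    rw [List.map_ofFn]; rfl
  have hideal : Ideal.ofList ((List.ofFn T).take i) = Ideal.span (T '' Set.Iio i) := by
    rw [Ideal.ofList]
    congr 1
    ext y
    simp only [Set.mem_ofPred_eq, List.mem_take_iff_getElem, List.getElem_ofFn,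
      List.length_ofFn, Set.mem_image, Set.mem_Iio, Fin.lt_def]
    exact ⟨fun ⟨j, hj, hy⟩ => ⟨⟨j, by omega⟩, by simp only; omega, hy⟩,
      fun ⟨j, hj, hy⟩ => ⟨j, by omega, hy⟩⟩
  rw [hlist, RingTheory.Sequence.isWeaklyRegular_map_algebraMap_iff] at h
  have hi := h.regular_mod_prev i (by simp)
  rw [hideal, List.getElem_ofFn, isSMulRegular_quotient_iff_mem_of_smul_mem] at hi
  have hmem (x : R) : Ideal.Quotient.mk I x ∈
      (Ideal.span (T '' Set.Iio i) • ⊤ : Submodule R (R ⧸ I)) ↔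
      x ∈ Ideal.span (T '' Set.Iio i) ⊔ I := by
    rw [Ideal.smul_top_eq_map, Submodule.restrictScalars_mem, Ideal.Quotient.algebraMap_eq,
      ← Ideal.mem_comap, Ideal.comap_map_of_surjective' _ Ideal.Quotient.mk_surjective,
      Ideal.mk_ker]
  rw [isSMulRegular_quotient_iff_mem_of_smul_mem]
  exact fun x hx => (hmem x).mp (hi _ ((hmem (T i * x)).mpr hx))

end RegularSequences

section PolynomialRings

variable {σ A : Type*} [CommRing A]

lemma X_mem_supported_of_mem {s : Set σ} {i : σ} (hi : i ∈ s) :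
    (X i : MvPolynomial σ A) ∈ supported A s :=
  Algebra.subset_adjoin (Set.mem_image_of_mem X hi)

lemma isSMulRegular_mvPolynomial_natCast {n : ℕ} (h : IsSMulRegular A (n : A)) :
    IsSMulRegular (MvPolynomial σ A) (n : MvPolynomial σ A) := by
  simpa using h.of_flat (S := MvPolynomial σ A)

lemma isSMulRegular_quotient_map_C {I : Ideal A} {a : A} (h : IsSMulRegular (A ⧸ I) a) :
    IsSMulRegular (MvPolynomial σ A ⧸ I.map (C (σ := σ))) (C a : MvPolynomial σ A) := by
  rw [isSMulRegular_quotient_iff_mem_of_smul_mem] at h ⊢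
  simp only [smul_eq_mul, mem_map_C_iff, coeff_C_mul]
  exact fun f hf m => h _ (hf m)

-- Separating the variable `X t` gives a homomorphism `A[σ] → (A[σ] ⧸ span s)[Y]`, `X t ↦ Y`, which
-- kills `span s` and through which the projection to `A[σ] ⧸ span s` factors.
theorem isSMulRegular_quotient_aeval_X_of_monic {t : σ} {s : Set (MvPolynomial σ A)}
    (hs : s ⊆ supported A {t}ᶜ) {P : Polynomial (supported A ({t}ᶜ : Set σ))} (hP : P.Monic) :
    IsSMulRegular (MvPolynomial σ A ⧸ Ideal.span s)
      (Polynomial.aeval (X t : MvPolynomial σ A) P) := by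
  classical
  let π : MvPolynomial σ A →ₐ[A] MvPolynomial σ A ⧸ Ideal.span s := Ideal.Quotient.mkₐ A _
  let Ψ : MvPolynomial σ A →ₐ[A] Polynomial (MvPolynomial σ A ⧸ Ideal.span s) :=
    aeval fun u => if u = t then Polynomial.X else Polynomial.C (π (X u))
  have Ψ_supported : ∀ f ∈ supported A {t}ᶜ, Ψ f = Polynomial.C (π f) := by
    refine AlgHom.adjoin_le_equalizer Ψ (Polynomial.CAlgHom.comp π) ?_
    rintro _ ⟨u, hu, rfl⟩
    simpa [Ψ] using fun h : u = t => absurd h hu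
  have Ψ_ideal : Ideal.span s ≤ RingHom.ker Ψ := by
    refine Ideal.span_le.mpr fun f hf => ?_
    have hπ : π f = 0 := Ideal.Quotient.eq_zero_iff_mem.mpr (Ideal.subset_span hf)
    rw [SetLike.mem_coe, RingHom.mem_ker, Ψ_supported f (hs hf), hπ, Polynomial.C_0]
  have Ψ_aeval : Ψ (Polynomial.aeval (X t) P) =
      P.map ((π : MvPolynomial σ A →+* _).comp (algebraMap (supported A ({t}ᶜ : Set σ)) _)) := by
    have hC : (Ψ : MvPolynomial σ A →+* _).comp (algebraMap (supported A ({t}ᶜ : Set σ)) _) =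
        Polynomial.C.comp ((π : MvPolynomial σ A →+* MvPolynomial σ A ⧸ Ideal.span s).comp
          (algebraMap (supported A ({t}ᶜ : Set σ)) (MvPolynomial σ A))) :=
      RingHom.ext fun f => Ψ_supported f f.2
    have hX : Ψ (X t) = Polynomial.X := by simp [Ψ]
    rw [Polynomial.aeval_def, ← AlgHom.coe_toRingHom, Polynomial.hom_eval₂, hC,
      AlgHom.coe_toRingHom, hX, Polynomial.map]
  have eval_Ψ : ((Polynomial.aeval (π (X t))).restrictScalars A).comp Ψ = π := by
    refine MvPolynomial.algHom_ext fun u => ?_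
    by_cases hu : u = t <;> simp [Ψ, hu]
  rw [isSMulRegular_quotient_iff_mem_of_smul_mem]
  intro b hb
  have hΨb : Ψ b = 0 := by
    have h := RingHom.mem_ker.mp (Ψ_ideal hb)
    rw [smul_eq_mul, map_mul, Ψ_aeval] at h
    exact (hP.map _).mul_right_eq_zero_iff.mp h
  rw [← Ideal.Quotient.eq_zero_iff_mem]
  change π b = 0
  rw [← eval_Ψ, AlgHom.comp_apply, hΨb, map_zero]

end PolynomialRings

namespace DeltaStructure

section General

variable {p : ℕ} {R : Type*} [CommRing R] (D : DeltaStructure p R)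

lemma add_pow_add_p_mul_delta_add (hp : p.Prime) (x y : R) :
    (x + y) ^ p + p * D.δ (x + y) = (x ^ p + p * D.δ x) + (y ^ p + p * D.δ y) := by
  have hsum : x * y * ∑ i ∈ Finset.Ioo 0 p, x ^ (i - 1) * y ^ (p - i - 1) *
        ((p.choose i / p : ℕ) : R) =
      ∑ i ∈ Finset.Ioo 0 p, ((p.choose i / p : ℕ) : R) * x ^ i * y ^ (p - i) := by
    rw [Finset.mul_sum]
    refine Finset.sum_congr rfl fun i hi => ?_
    obtain ⟨hi0, hip⟩ := Finset.mem_Ioo.mp hi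
    rw [← mul_pow_sub_one hi0.ne' x, ← mul_pow_sub_one (Nat.sub_ne_zero_of_lt hip) y]
    ring
  rw [D.delta_add, add_pow_prime_eq hp, ← hsum]
  ring

lemma natCast_pow_add_p_mul_delta (hp : p.Prime) (n : ℕ) : (n : R) ^ p + p * D.δ n = n := by
  induction n with
  | zero => simp [D.delta_zero, hp.ne_zero]
  | succ n ih => rw [Nat.cast_succ, D.add_pow_add_p_mul_delta_add hp, ih, D.delta_one]; simp

lemma delta_p (hp : p.Prime) (hR : IsSMulRegular R (p : R)) :
    D.δ (p : R) = 1 - (p : R) ^ (p - 1) := by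
  refine hR ?_
  simp only [smul_eq_mul]
  linear_combination D.natCast_pow_add_p_mul_delta hp p + mul_pow_sub_one hp.ne_zero (p : R)

lemma delta_p_mul (hp : p.Prime) (u : R) : D.δ (p * u) = p * D.δ u + D.δ p * u ^ p := by
  rw [D.delta_mul]
  linear_combination D.δ u * D.natCast_pow_add_p_mul_delta hp p

lemma delta_p_mul_add_sub_mem (hp : p.Prime) (hR : IsSMulRegular R (p : R)) {S : Subring R}
    {u f : R} (hu : u ∈ S) (hf : f ∈ S) (hδf : D.δ f ∈ S) :
    D.δ (p * u + f) - p * D.δ u ∈ S := by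
  have hpS : (p : R) ∈ S := natCast_mem S p
  rw [D.delta_add, D.delta_p_mul hp, D.delta_p hp hR, sub_right_comm, add_assoc,
    add_sub_cancel_left]
  refine sub_mem (add_mem (mul_mem (sub_mem (one_mem S) (pow_mem hpS _)) (pow_mem hu p)) hδf)
    (sum_mem fun i _ => ?_)
  exact mul_mem (mul_mem (natCast_mem S _) (pow_mem (mul_mem hpS hu) i)) (pow_mem hf _)

lemma p_dvd_delta_p_mul_add_sub (hp : p.Prime) (hR : IsSMulRegular R (p : R)) (u f : R) :
    (p : R) ∣ D.δ (p * u + f) - (u ^ p + D.δ f) := by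
  have hsum : (p : R) ∣ ∑ i ∈ Finset.Ioo 0 p,
      ((p.choose i / p : ℕ) : R) * (p * u) ^ i * f ^ (p - i) :=
    Finset.dvd_sum fun i hi => Dvd.dvd.mul_right (Dvd.dvd.mul_left
      (dvd_pow (dvd_mul_right _ u) (Finset.mem_Ioo.mp hi).1.ne') _) _
  have hpow : (p : R) ∣ (p : R) ^ (p - 1) := dvd_pow_self _ (Nat.sub_ne_zero_of_lt hp.one_lt)
  rw [D.delta_add, D.delta_p_mul hp, D.delta_p hp hR]
  convert dvd_sub (dvd_sub (dvd_mul_right (p : R) (D.δ u)) (hpow.mul_right (u ^ p))) hsum using 1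
  ring

lemma delta_mem_of_mem_adjoin {A : Type*} [CommRing A] [Algebra A R] {s : Set R}
    {M : Submodule (Algebra.adjoin A s) R} (one_mem : 1 ∈ M)
    (p_mul_mem : ∀ x ∈ M, ∀ y ∈ M, (p : R) * x * y ∈ M)
    (delta_algebraMap : ∀ a, D.δ (algebraMap A R a) ∈ M) (delta_mem : ∀ x ∈ s, D.δ x ∈ M)
    {f : R} (hf : f ∈ Algebra.adjoin A s) : D.δ f ∈ M := by
  have mul_mem_M {x y : R} (hx : x ∈ Algebra.adjoin A s) (hy : y ∈ M) : x * y ∈ M :=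
    M.smul_mem ⟨x, hx⟩ hy
  induction hf using Algebra.adjoin_induction with
  | mem x hx => exact delta_mem x hx
  | algebraMap a => exact delta_algebraMap a
  | add x y hx hy ihx ihy =>
    rw [D.delta_add]
    refine sub_mem (add_mem ihx ihy) (sum_mem fun i _ => ?_)
    rw [← mul_one (_ * _)]
    exact mul_mem_M (mul_mem (mul_mem (natCast_mem _ _) (pow_mem hx i)) (pow_mem hy _)) one_mem
  | mul x y hx hy ihx ihy =>
    rw [D.delta_mul, mul_comm (D.δ x)]
    exact add_mem (add_mem (mul_mem_M (pow_mem hy p) ihx) (mul_mem_M (pow_mem hx p) ihy))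
      (p_mul_mem _ ihx _ ihy)

end General

section Polynomial

variable {p : ℕ} {A ι : Type*} [CommRing A] {DA : DeltaStructure p A}
  {DB : DeltaStructure p (MvPolynomial (ι × ℕ) A)}

lemma delta_mem_supported (hBC : ∀ a : A, DB.δ (C a) = C (DA.δ a))
    (hBX : ∀ i n, DB.δ (X (i, n)) = X (i, n + 1)) {s s' : Set (ι × ℕ)} (hss' : s ⊆ s')
    (hs' : ∀ i n, (i, n) ∈ s → (i, n + 1) ∈ s') {f : MvPolynomial (ι × ℕ) A}
    (hf : f ∈ supported A s) : DB.δ f ∈ supported A s' := by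
  let M : Submodule (supported A s) (MvPolynomial (ι × ℕ) A) :=
    { (supported A s').toAddSubmonoid with
      smul_mem' := fun c _ hx => (supported A s').mul_mem (supported_mono hss' c.2) hx }
  refine DB.delta_mem_of_mem_adjoin (M := M) (one_mem (supported A s'))
    (fun x hx y hy => (supported A s').mul_mem (mul_mem (natCast_mem _ p) hx) hy)
    (fun a => ?_) ?_ hf
  · rw [algebraMap_eq, hBC]
    exact (supported A s').algebraMap_mem _
  · rintro _ ⟨⟨i, n⟩, hin, rfl⟩
    rw [hBX]
    exact X_mem_supported_of_mem (hs' i n hin)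

lemma exists_degree_le_one_p_dvd_delta_sub_aeval_X (hBC : ∀ a : A, DB.δ (C a) = C (DA.δ a))
    (hBX : ∀ i n, DB.δ (X (i, n)) = X (i, n + 1)) {t : ι × ℕ} {f : MvPolynomial (ι × ℕ) A}
    (hf : f ∈ supported A {t}ᶜ) :
    ∃ Q : Polynomial (supported A ({t}ᶜ : Set (ι × ℕ))), Q.degree ≤ 1 ∧
      (p : MvPolynomial (ι × ℕ) A) ∣ DB.δ f - Polynomial.aeval (X t) Q := by
  let S := supported A ({t}ᶜ : Set (ι × ℕ))
  let M : Submodule S (MvPolynomial (ι × ℕ) A) :=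
    Submodule.span S {X t, 1} ⊔ (Ideal.span {(p : MvPolynomial (ι × ℕ) A)}).restrictScalars S
  have mem_of_mem_S {x : MvPolynomial (ι × ℕ) A} (hx : x ∈ S) : x ∈ M := by
    have := Submodule.smul_mem M ⟨x, hx⟩
      (Submodule.mem_sup_left (Submodule.subset_span (.inr rfl)))
    rwa [Subalgebra.smul_def, smul_eq_mul, mul_one] at this
  have hδ : DB.δ f ∈ M := by
    refine DB.delta_mem_of_mem_adjoin (mem_of_mem_S (one_mem S)) (fun x _ y _ => ?_)
      (fun a => ?_) ?_ hf
    · rw [mul_assoc]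
      exact Submodule.mem_sup_right (Ideal.mem_span_singleton.mpr (dvd_mul_right _ _))
    · rw [algebraMap_eq, hBC]
      exact mem_of_mem_S (S.algebraMap_mem _)
    · rintro _ ⟨⟨i, n⟩, -, rfl⟩
      rw [hBX]
      by_cases h : (i, n + 1) = t
      · rw [h]
        exact Submodule.mem_sup_left (Submodule.subset_span (.inl rfl))
      · exact mem_of_mem_S (X_mem_supported_of_mem h)
  obtain ⟨_, hlin, y, hy, hsum⟩ := Submodule.mem_sup.mp hδ
  obtain ⟨h, g, rfl⟩ := Submodule.mem_span_pair.mp hlin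
  refine ⟨Polynomial.C h * Polynomial.X + Polynomial.C g, Polynomial.degree_linear_le, ?_⟩
  have haeval : Polynomial.aeval (X t : MvPolynomial (ι × ℕ) A)
      (Polynomial.C h * Polynomial.X + Polynomial.C g) = h • X t + g • 1 := by
    simp [Algebra.smul_def]
  rw [haeval, ← hsum, add_sub_cancel_left]
  exact Ideal.mem_span_singleton.mp hy

/-- The generator `δⁿ(p X_{i,0} - T_i)` of the ideal `K`, indexed by `(n, i)` in lexicographic order
so that the generators without a δ come first. -/
noncomputable def relator (D : DeltaStructure p (MvPolynomial (ι × ℕ) A)) (T : ι → A)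
    (k : ℕ ×ₗ ι) : MvPolynomial (ι × ℕ) A :=
  D.δ^[(ofLex k).1]
    ((p : MvPolynomial (ι × ℕ) A) * X ((ofLex k).2, 0) - C (T (ofLex k).2))

lemma relator_zero (D : DeltaStructure p (MvPolynomial (ι × ℕ) A)) (T : ι → A) (i : ι) :
    D.relator T (toLex (0, i)) = (p : MvPolynomial (ι × ℕ) A) * X (i, 0) - C (T i) :=
  rfl

lemma relator_succ (D : DeltaStructure p (MvPolynomial (ι × ℕ) A)) (T : ι → A) (n : ℕ) (i : ι) :
    D.relator T (toLex (n + 1, i)) = D.δ (D.relator T (toLex (n, i))) :=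
  Function.iterate_succ_apply' _ _ _

lemma range_relator (D : DeltaStructure p (MvPolynomial (ι × ℕ) A)) (T : ι → A) :
    Set.range (D.relator T) = {y | ∃ (i : ι) (n : ℕ),
      y = D.δ^[n] ((p : MvPolynomial (ι × ℕ) A) * X (i, 0) - C (T i))} :=
  Set.ext fun _ => ⟨fun ⟨k, hk⟩ => ⟨(ofLex k).2, (ofLex k).1, hk.symm⟩,
    fun ⟨i, n, hy⟩ => ⟨toLex (n, i), hy.symm⟩⟩

lemma relator_sub_p_mul_X_mem_supported (hp : p.Prime) (hA : IsSMulRegular A (p : A))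
    (hBC : ∀ a : A, DB.δ (C a) = C (DA.δ a)) (hBX : ∀ i n, DB.δ (X (i, n)) = X (i, n + 1))
    (T : ι → A) (n : ℕ) (i : ι) :
    DB.relator T (toLex (n, i)) - (p : MvPolynomial (ι × ℕ) A) * X (i, n) ∈
      supported A ({i} ×ˢ Set.Iio n) := by
  induction n with
  | zero =>
    rw [relator_zero, sub_sub_cancel_left]
    exact neg_mem (Subalgebra.algebraMap_mem _ (T i))
  | succ n ih =>
    let S := supported A ({i} ×ˢ Set.Iio (n + 1) : Set (ι × ℕ))
    have hX : (X (i, n) : MvPolynomial (ι × ℕ) A) ∈ S :=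
      X_mem_supported_of_mem (Set.mk_mem_prod rfl n.lt_succ_self)
    have hsub : ({i} ×ˢ Set.Iio n : Set (ι × ℕ)) ⊆ {i} ×ˢ Set.Iio (n + 1) :=
      Set.prod_mono_right (Set.Iio_subset_Iio n.le_succ)
    have hδ := delta_mem_supported hBC hBX hsub
      (fun _ _ h => Set.mk_mem_prod h.1 (Nat.succ_lt_succ h.2)) ih
    have hmem := DB.delta_p_mul_add_sub_mem hp (isSMulRegular_mvPolynomial_natCast hA)
      (S := S.toSubring) hX (supported_mono hsub ih) hδ
    rwa [add_sub_cancel, hBX, ← relator_succ] at hmem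

lemma exists_monic_p_dvd_relator_succ_sub_aeval_X (hp : p.Prime) (hA : IsSMulRegular A (p : A))
    (hBC : ∀ a : A, DB.δ (C a) = C (DA.δ a)) (hBX : ∀ i n, DB.δ (X (i, n)) = X (i, n + 1))
    (T : ι → A) (n : ℕ) (i : ι) :
    ∃ P : Polynomial (supported A ({(i, n)}ᶜ : Set (ι × ℕ))), P.Monic ∧
      (p : MvPolynomial (ι × ℕ) A) ∣
        DB.relator T (toLex (n + 1, i)) - Polynomial.aeval (X (i, n)) P := by
  let f := DB.relator T (toLex (n, i)) - (p : MvPolynomial (ι × ℕ) A) * X (i, n)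
  have relator_eq : (p : MvPolynomial (ι × ℕ) A) * X (i, n) + f = DB.relator T (toLex (n, i)) :=
    add_sub_cancel _ _
  have hf : f ∈ supported A ({(i, n)}ᶜ : Set (ι × ℕ)) := by
    refine supported_mono ?_ (relator_sub_p_mul_X_mem_supported hp hA hBC hBX T n i)
    rintro _ ⟨-, hlt⟩ rfl
    exact lt_irrefl n hlt
  obtain ⟨Q, hQ, hδf⟩ := exists_degree_le_one_p_dvd_delta_sub_aeval_X hBC hBX hf
  refine ⟨Polynomial.X ^ p + Q,
    Polynomial.monic_X_pow_add (hQ.trans_lt (mod_cast hp.one_lt)), ?_⟩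
  have hδ := DB.p_dvd_delta_p_mul_add_sub hp (isSMulRegular_mvPolynomial_natCast hA) (X (i, n)) f
  rw [relator_eq, ← relator_succ] at hδ
  convert dvd_add hδ hδf using 1
  rw [map_add, map_pow, Polynomial.aeval_X]
  ring

variable [LinearOrder ι]

lemma span_relator_image_Iio_zero_sup (D : DeltaStructure p (MvPolynomial (ι × ℕ) A)) (T : ι → A)
    (i : ι) :
    Ideal.span (D.relator T '' Set.Iio (toLex (0, i))) ⊔
        Ideal.span {(p : MvPolynomial (ι × ℕ) A)} =
      (Ideal.span (T '' Set.Iio i) ⊔ Ideal.span {(p : A)}).map C := by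
  have hIio : Set.Iio (toLex ((0 : ℕ), i)) = (fun j => toLex (0, j)) '' Set.Iio i := by
    ext k
    constructor
    · intro hk
      obtain hlt | ⟨h0, hi⟩ := Prod.Lex.lt_iff.mp hk
      · exact absurd hlt (Nat.not_lt_zero _)
      · exact ⟨(ofLex k).2, hi, congrArg toLex (Prod.ext h0.symm rfl)⟩
    · rintro ⟨j, hj, rfl⟩
      exact Prod.Lex.toLex_lt_toLex.mpr (.inr ⟨rfl, hj⟩)
  have hneg : (fun j => -C (T j)) '' Set.Iio i =
      -(C '' (T '' Set.Iio i) : Set (MvPolynomial (ι × ℕ) A)) := by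
    simp only [← Set.image_neg_eq_neg, Set.image_image]
  rw [hIio, Set.image_image, span_image_sup_eq_of_sub_mem (Z := fun j => -C (T j)), hneg,
    Ideal.span, Submodule.span_neg, Ideal.map_sup, Ideal.map_span, Ideal.map_span,
    Set.image_singleton, map_natCast]
  intro j _
  rw [relator_zero, sub_neg_eq_add, sub_add_cancel]
  exact Ideal.mem_span_singleton.mpr (dvd_mul_right _ _)

lemma isSMulRegular_relator_zero (D : DeltaStructure p (MvPolynomial (ι × ℕ) A)) {T : ι → A}
    {i : ι}
    (hT : IsSMulRegular (A ⧸ Ideal.span (T '' Set.Iio i) ⊔ Ideal.span {(p : A)}) (T i)) :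
    IsSMulRegular (MvPolynomial (ι × ℕ) A ⧸ Ideal.span (D.relator T '' Set.Iio (toLex (0, i))) ⊔
      Ideal.span {(p : MvPolynomial (ι × ℕ) A)}) (D.relator T (toLex (0, i))) := by
  have hmem : D.relator T (toLex (0, i)) - -1 * C (T i) ∈
      Ideal.span (D.relator T '' Set.Iio (toLex (0, i))) ⊔
        Ideal.span {(p : MvPolynomial (ι × ℕ) A)} := by
    rw [relator_zero, neg_one_mul, sub_neg_eq_add, sub_add_cancel]
    exact Ideal.mem_sup_right (Ideal.mem_span_singleton.mpr (dvd_mul_right _ _))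
  rw [isSMulRegular_quotient_iff_of_sub_mem hmem, span_relator_image_Iio_zero_sup]
  exact (isUnit_one.neg.isSMulRegular _).mul (isSMulRegular_quotient_map_C hT)

lemma isSMulRegular_relator_succ (hp : p.Prime) (hA : IsSMulRegular A (p : A))
    (hBC : ∀ a : A, DB.δ (C a) = C (DA.δ a)) (hBX : ∀ i n, DB.δ (X (i, n)) = X (i, n + 1))
    (T : ι → A) (n : ℕ) (i : ι) :
    IsSMulRegular (MvPolynomial (ι × ℕ) A ⧸
      Ideal.span (DB.relator T '' Set.Iio (toLex (n + 1, i))) ⊔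
        Ideal.span {(p : MvPolynomial (ι × ℕ) A)}) (DB.relator T (toLex (n + 1, i))) := by
  let tail (k : ℕ ×ₗ ι) : MvPolynomial (ι × ℕ) A :=
    DB.relator T k - (p : MvPolynomial (ι × ℕ) A) * X ((ofLex k).2, (ofLex k).1)
  have relator_sub_tail_mem (k : ℕ ×ₗ ι) :
      DB.relator T k - tail k ∈ Ideal.span {(p : MvPolynomial (ι × ℕ) A)} := by
    rw [sub_sub_cancel]
    exact Ideal.mem_span_singleton.mpr (dvd_mul_right _ _)
  have tail_supported : tail '' Set.Iio (toLex (n + 1, i)) ⊆ supported A {(i, n)}ᶜ := by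
    rintro _ ⟨k, hk, rfl⟩
    refine supported_mono ?_ (relator_sub_p_mul_X_mem_supported hp hA hBC hBX T _ _)
    rintro _ ⟨hi, hn⟩ rfl
    rcases Prod.Lex.lt_iff.mp hk with h | ⟨-, h⟩
    · exact absurd (Nat.lt_succ_iff.mp h) (not_le.mpr hn)
    · exact h.ne' hi
  obtain ⟨P, hP, hdvd⟩ := exists_monic_p_dvd_relator_succ_sub_aeval_X hp hA hBC hBX T n i
  rw [isSMulRegular_quotient_iff_of_sub_mem
      (Ideal.mem_sup_right (Ideal.mem_span_singleton.mpr hdvd)),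
    span_image_sup_eq_of_sub_mem (fun k _ => relator_sub_tail_mem k), ← Ideal.span_union]
  exact isSMulRegular_quotient_aeval_X_of_monic
    (Set.union_subset tail_supported (Set.singleton_subset_iff.mpr (natCast_mem _ p))) hP

end Polynomial

end DeltaStructure

theorem delta_envelope_p_torsion_free_general (p : ℕ) (hp : p.Prime)
    (A : Type*) [CommRing A] (DA : DeltaStructure p A)
    (ι : Type*) [LinearOrder ι] [WellFoundedLT ι] (T : ι → A)
    (DB : DeltaStructure p (MvPolynomial (ι × ℕ) A))
    (hBC : ∀ a : A, DB.δ (C a) = C (DA.δ a))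
    (hBX : ∀ (i : ι) (n : ℕ), DB.δ (X (i, n)) = X (i, n + 1))
    (K : Ideal (MvPolynomial (ι × ℕ) A))
    (hK : K = Ideal.span {y : MvPolynomial (ι × ℕ) A | ∃ (i : ι) (n : ℕ),
      y = DB.δ^[n] ((p : MvPolynomial (ι × ℕ) A) * X (i, 0) - C (T i))})
    (htf : ∀ x : A, (p : A) * x = 0 → x = 0)
    (hreg : ∀ i, IsSMulRegular (A ⧸ Ideal.span (T '' Set.Iio i) ⊔ Ideal.span {(p : A)}) (T i)) :
    ∀ x : MvPolynomial (ι × ℕ) A ⧸ K,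
      (p : MvPolynomial (ι × ℕ) A ⧸ K) * x = 0 → x = 0 := by
  have hA : IsSMulRegular A (p : A) := isSMulRegular_iff_right_eq_zero_of_smul.mpr htf
  have relator_regular (k : ℕ ×ₗ ι) : IsSMulRegular (MvPolynomial (ι × ℕ) A ⧸
      Ideal.span (DB.relator T '' Set.Iio k) ⊔ Ideal.span {(p : MvPolynomial (ι × ℕ) A)})
      (DB.relator T k) :=
    match k with
    | (0, i) => DB.isSMulRegular_relator_zero (hreg i)
    | (n + 1, i) => DeltaStructure.isSMulRegular_relator_succ hp hA hBC hBX T n i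
  rw [hK, ← DB.range_relator]
  exact isSMulRegular_iff_right_eq_zero_of_smul.mp
    (isSMulRegular_quotient_span_range (isSMulRegular_mvPolynomial_natCast hA) relator_regular)

/-- If `A` is `p`-torsion free and the images of `T_1, …, T_d` in `A/pA` form a regular
sequence, then the quotient `D = B/K` of `B = A[X_{i,n}]` (with `δ(X_{i,n}) = X_{i,n+1}`)
by the δ-ideal `K` generated by the elements `p·X_{i,0} − T_i` is `p`-torsion free. -/
theorem delta_envelope_p_torsion_free (p : ℕ) (hp : p.Prime)
    (A : Type*) [CommRing A] (DA : DeltaStructure p A)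
    (d : ℕ) (T : Fin d → A)
    (DB : DeltaStructure p (MvPolynomial (Fin d × ℕ) A))
    (hBC : ∀ a : A, DB.δ (C a) = C (DA.δ a))
    (hBX : ∀ (i : Fin d) (n : ℕ), DB.δ (X (i, n)) = X (i, n + 1))
    (K : Ideal (MvPolynomial (Fin d × ℕ) A))
    (hK : K = Ideal.span {y : MvPolynomial (Fin d × ℕ) A | ∃ (i : Fin d) (n : ℕ),
      y = DB.δ^[n] ((p : MvPolynomial (Fin d × ℕ) A) * X (i, 0) - C (T i))})
    (htf : ∀ x : A, (p : A) * x = 0 → x = 0)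
    (hreg : RingTheory.Sequence.IsRegular (A ⧸ Ideal.span {(p : A)})
      (List.ofFn fun i : Fin d => Ideal.Quotient.mk (Ideal.span {(p : A)}) (T i))) :
    ∀ x : MvPolynomial (Fin d × ℕ) A ⧸ K,
      (p : MvPolynomial (Fin d × ℕ) A ⧸ K) * x = 0 → x = 0 := by
  exact delta_envelope_p_torsion_free_general p hp A DA (Fin d) T DB hBC hBX K hK htf
    (isSMulRegular_of_isWeaklyRegular_ofFn hreg.toIsWeaklyRegular)
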